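/- arXiv:2112.14044 — 9 statements merged into one kernel-verified Lean document; each statement's English description precedes it below -/
import Mathlib

section
/- Accumulation after arrangement is the identity: for every multiset m : Sym X K, PMF.map acc (arr m) = PMF.pure m. -/
universe u

/-- Accumulation: send a tuple to its multiset of values. -/
def acc {X : Type u} {K : ℕ} (v : Fin K → X) : Sym X K :=
  ⟨(List.ofFn v : List X), by simp⟩

/-- Pushforward of the uniform distribution on permutations under `σ ↦ v ∘ σ`. -/
noncomputable def perm {X : Type u} {K : ℕ} (v : Fin K → X) : PMF (Fin K → X) :=
  PMF.map (fun σ => v ∘ σ) (PMF.uniformOfFintype (Equiv.Perm (Fin K)))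

/-- Accumulation after arrangement is the identity: `acc` pushed forward along
`arr m` is the Dirac distribution at `m`. -/
theorem acc_map_arr {X : Type u} {K : ℕ} (hK : 1 ≤ K)
    (arr : Sym X K → PMF (Fin K → X))
    (harr : ∀ v : Fin K → X, arr (acc v) = perm v)
    (m : Sym X K) :
    PMF.map acc (arr m) = PMF.pure m := by
  have hsurj : ∃ v : Fin K → X, acc v = m := by
    obtain ⟨s, hs⟩ := m
    induction s using Quotient.inductionOn with
    | h l =>
      have hl : l.length = K := hs
      subst hl
      exact ⟨l.get, Subtype.ext (by simp [acc])⟩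
  obtain ⟨v, rfl⟩ := hsurj
  have hperm : (acc ∘ fun σ : Equiv.Perm (Fin K) => v ∘ σ) = Function.const _ (acc v) := by
    funext σ
    apply Subtype.ext
    exact Multiset.coe_eq_coe.mpr (Equiv.Perm.ofFn_comp_perm σ v)
  have hcoe : perm v = PMF.map (fun f : Fin K → Fin K => v ∘ f)
      (PMF.map (fun σ : Equiv.Perm (Fin K) => (σ : Fin K → Fin K))
        (PMF.uniformOfFintype (Equiv.Perm (Fin K)))) := rfl
  rw [harr, hcoe, PMF.map_comp, PMF.map_comp]
  change PMF.map (acc ∘ fun σ : Equiv.Perm (Fin K) => v ∘ σ) _ = _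
  rw [hperm, PMF.map_const]
end

section
/- Uniform deletion after a uniform random permutation equals dropping the last coordinate after a uniform random permutation: for every tuple v : Fin (K+1) → X, (perm v).bind del = PMF.map (fun w => w ∘ Fin.castSucc) (perm v). -/
universe u

/-- Uniform deletion of one coordinate: pushforward of the uniform distribution
on `Fin (K+1)` under `i ↦ v ∘ Fin.succAbove i`. -/
noncomputable def del {X : Type u} {K : ℕ} (v : Fin (K + 1) → X) : PMF (Fin K → X) :=
  PMF.map (fun i => v ∘ Fin.succAbove i) (PMF.uniformOfFintype (Fin (K + 1)))

theorem uniform_perm_map_mul_right {K : ℕ} (c : Equiv.Perm (Fin K)) :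
    PMF.map (fun σ => σ * c) (PMF.uniformOfFintype (Equiv.Perm (Fin K))) =
      PMF.uniformOfFintype (Equiv.Perm (Fin K)) := by
  ext τ
  rw [PMF.map_apply, tsum_eq_single (τ * c⁻¹)]
  · simp
  · intro σ hσ
    rw [if_neg]
    rintro rfl
    simp at hσ

theorem succAbove_eq_perm {K : ℕ} (i : Fin (K + 1)) :
    Fin.succAbove i = (i.cycleRange.symm * finRotate (K + 1) : Equiv.Perm _) ∘ Fin.castSucc := by
  funext j
  simp [Fin.cycleRange_symm_succ]

theorem perm_eq {X : Type u} {K : ℕ} (v : Fin K → X) :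
    perm v = PMF.map (fun σ : Equiv.Perm (Fin K) => v ∘ σ)
      (PMF.uniformOfFintype (Equiv.Perm (Fin K))) := by
  change PMF.map (fun σ => v ∘ σ) (PMF.map (fun σ : Equiv.Perm (Fin K) => (σ : Fin K → Fin K))
    (PMF.uniformOfFintype (Equiv.Perm (Fin K)))) = _
  rw [PMF.map_comp]
  rfl

/-- Uniform deletion after a uniform random permutation equals dropping the last
coordinate after a uniform random permutation. -/
theorem perm_bind_del {X : Type u} {K : ℕ} (v : Fin (K + 1) → X) :
    (perm v).bind del = PMF.map (fun w => w ∘ Fin.castSucc) (perm v) := by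
  have h : ∀ i : Fin (K + 1),
      PMF.map (fun σ : Equiv.Perm (Fin (K + 1)) => (v ∘ σ) ∘ Fin.succAbove i)
        (PMF.uniformOfFintype _) =
      PMF.map (fun σ : Equiv.Perm (Fin (K + 1)) => (v ∘ σ) ∘ Fin.castSucc)
        (PMF.uniformOfFintype _) := by
    intro i
    conv_rhs => rw [← uniform_perm_map_mul_right (i.cycleRange.symm * finRotate (K + 1))]
    rw [PMF.map_comp, succAbove_eq_perm]
    rfl
  rw [perm_eq, PMF.bind_map, PMF.map_comp]
  change (PMF.uniformOfFintype (Equiv.Perm (Fin (K + 1)))).bind (fun σ =>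
    (PMF.uniformOfFintype (Fin (K + 1))).bind
      (fun i => PMF.pure ((v ∘ σ) ∘ Fin.succAbove i))) = _
  rw [PMF.bind_comm]
  have h' : ∀ i : Fin (K + 1), ((PMF.uniformOfFintype (Equiv.Perm (Fin (K + 1)))).bind
      (fun σ => PMF.pure ((v ∘ σ) ∘ Fin.succAbove i))) = _ := h
  simp_rw [h', PMF.bind_const]
  rfl
end

section
/- Frequentist learning after draw-and-delete is frequentist learning: for K ≥ 1 and every multiset m : Sym X (K+1), (DD m).bind Flrn = Flrn m. -/
open scoped ENNReal

universe u

lemma count_acc {X : Type u} [DecidableEq X] {K : ℕ} (v : Fin K → X) (x : X) :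
    Multiset.count x (acc v).toMultiset = ∑ i, if v i = x then 1 else 0 := by
  change Multiset.count x ((List.ofFn v : List X) : Multiset X) = _
  rw [Multiset.coe_count]
  induction K with
  | zero => simp
  | succ n ih =>
    rw [List.ofFn_succ, List.count_cons, ih, Fin.sum_univ_succ, add_comm]
    simp

lemma sum_count_del {X : Type u} [DecidableEq X] {K : ℕ} (v : Fin (K + 1) → X) (x : X) :
    ∑ i : Fin (K + 1), Multiset.count x (acc (v ∘ Fin.succAbove i)).toMultiset
      = K * Multiset.count x (acc v).toMultiset := by
  have h : ∀ i : Fin (K + 1), Multiset.count x (acc v).toMultiset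
      = (if v i = x then 1 else 0)
        + Multiset.count x (acc (v ∘ Fin.succAbove i)).toMultiset := by
    intro i
    rw [count_acc, count_acc, Fin.sum_univ_succAbove _ i]
    rfl
  have h2 := Finset.sum_congr (rfl : (Finset.univ : Finset (Fin (K + 1))) = _) (fun i _ => h i)
  rw [Finset.sum_add_distrib, ← count_acc] at h2
  simp only [Finset.sum_const, Finset.card_univ, Fintype.card_fin, smul_eq_mul] at h2
  linarith

lemma acc_surj {X : Type u} {K : ℕ} (m : Sym X K) : ∃ v : Fin K → X, acc v = m := by
  obtain ⟨s, hs⟩ := m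
  induction s using Quotient.inductionOn with
  | h l =>
    have hl : l.length = K := hs
    subst hl
    refine ⟨l.get, ?_⟩
    apply Subtype.ext
    simp [acc]

/-- Frequentist learning after draw-and-delete is frequentist learning.
Here `DD` is draw-and-delete, the unique map with `DD (acc v) = PMF.map acc (del v)`,
and `Flrn` is frequentist learning, assigning to `x` the probability
(multiplicity of `x` in the multiset)/(size of the multiset). -/
theorem DD_bind_Flrn {X : Type u} [DecidableEq X] {K : ℕ} (hK : 1 ≤ K)
    (DD : Sym X (K + 1) → PMF (Sym X K))
    (hDD : ∀ v : Fin (K + 1) → X, DD (acc v) = PMF.map acc (del v))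
    (Flrn : {n : ℕ} → Sym X n → PMF X)
    (hFlrn : ∀ {n : ℕ}, 1 ≤ n → ∀ (m : Sym X n) (x : X),
      Flrn m x = (Multiset.count x m.toMultiset : ℝ≥0∞) / (n : ℝ≥0∞))
    (m : Sym X (K + 1)) :
    (DD m).bind Flrn = Flrn m := by
  obtain ⟨v, rfl⟩ := acc_surj m
  rw [hDD, del, PMF.map_comp, PMF.bind_map]
  ext x
  rw [PMF.bind_apply, tsum_fintype, hFlrn (by omega)]
  have e : ∀ i : Fin (K + 1), (Flrn ∘ acc ∘ fun i => v ∘ Fin.succAbove i) i x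
      = (Multiset.count x (acc (v ∘ Fin.succAbove i)).toMultiset : ℝ≥0∞) * (K : ℝ≥0∞)⁻¹ := by
    intro i
    rw [← div_eq_mul_inv, ← hFlrn hK]
    rfl
  simp only [e, PMF.uniformOfFintype_apply, Fintype.card_fin]
  rw [← Finset.mul_sum, ← Finset.sum_mul, ← Nat.cast_sum, sum_count_del, Nat.cast_mul,
    mul_comm (K : ℝ≥0∞), mul_assoc, ENNReal.mul_inv_cancel (by positivity) (by simp), mul_one,
    mul_comm, div_eq_mul_inv]
end

section
/- Arrangement after the multinomial distribution recovers the i.i.d. distribution: for every p : PMF X and K : ℕ, (mn K p).bind arr = iid K p, i.e. the distribution on tuples obtained by sampling a K-sized multiset multinomially from p and then arranging it uniformly assigns to each tuple v : Fin K → X the mass ∏ i, p (v i). -/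
universe u

/-- Arrangement after the multinomial recovers the i.i.d. distribution:
`iid` is the distribution of `K` independent samples of `p` (mass `∏ i, p (v i)`),
the multinomial is `mn K p = PMF.map acc iid`, and `arr` is the arrangement map,
the unique map with `arr (acc v) = perm v`. -/
theorem mn_bind_arr {X : Type u} {K : ℕ} (p : PMF X)
    (iid : PMF (Fin K → X))
    (hiid : ∀ v : Fin K → X, iid v = ∏ i, p (v i))
    (arr : Sym X K → PMF (Fin K → X))
    (harr : ∀ v : Fin K → X, arr (acc v) = perm v) :
    (PMF.map acc iid).bind arr = iid := by
  have hinv : ∀ σ : Equiv.Perm (Fin K), PMF.map (fun v : Fin K → X => v ∘ σ) iid = iid := by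
    intro σ
    ext w
    rw [PMF.map_apply, tsum_eq_single (w ∘ σ.symm)]
    · rw [if_pos (by funext i; simp), hiid, hiid]
      exact Equiv.prod_comp σ.symm (fun i => p (w i))
    · intro v hv
      rw [if_neg]
      intro h
      apply hv
      rw [h]
      funext i
      simp
  have h1 : (PMF.map acc iid).bind arr = iid.bind perm := by
    rw [PMF.bind_map]
    congr 1
    funext v
    exact harr v
  rw [h1]
  calc iid.bind perm
      = iid.bind (fun v => (PMF.uniformOfFintype (Equiv.Perm (Fin K))).bind
          (fun σ => PMF.pure (v ∘ σ))) := by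
        congr 1
        funext v
        rw [perm, ← PMF.bind_pure_comp]
        change ((PMF.uniformOfFintype (Equiv.Perm (Fin K))).bind
          (fun a => PMF.pure (a : Fin K → Fin K))).bind _ = _
        rw [PMF.bind_bind]
        congr 1
        funext σ
        rw [PMF.pure_bind]
        rfl
    _ = (PMF.uniformOfFintype (Equiv.Perm (Fin K))).bind
          (fun σ => iid.bind (fun v => PMF.pure (v ∘ σ))) := PMF.bind_comm _ _ _
    _ = (PMF.uniformOfFintype (Equiv.Perm (Fin K))).bind (fun _ => iid) := by
        congr 1
        funext σ
        exact hinv σ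
    _ = iid := PMF.bind_const _ _
end

section
/- Draw-and-delete commutes with the multinomial: for every p : PMF X and K : ℕ, (mn (K+1) p).bind DD = mn K p. -/
universe u

theorem map_succAbove_iid {X : Type u} {K : ℕ} (p : PMF X)
    (iid : (n : ℕ) → PMF (Fin n → X))
    (hiid : ∀ (n : ℕ) (v : Fin n → X), iid n v = ∏ i, p (v i)) (i : Fin (K + 1)) :
    PMF.map (fun v : Fin (K + 1) → X => v ∘ Fin.succAbove i) (iid (K + 1)) = iid K := by
  classical
  ext w
  rw [PMF.map_apply, hiid K w, ← (Fin.insertNthEquiv (fun _ => X) i).tsum_eq,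
    ENNReal.summable.tsum_prod' (fun _ => ENNReal.summable)]
  have h : ∀ (a : X) (b : Fin K → X),
      (Fin.insertNthEquiv (fun _ => X) i) (a, b) ∘ Fin.succAbove i = b := by
    intro a b
    ext j
    simp [Fin.insertNthEquiv]
  have h2 : ∀ (a : X) (b : Fin K → X),
      iid (K + 1) ((Fin.insertNthEquiv (fun _ => X) i) (a, b)) = p a * ∏ j, p (b j) := by
    intro a b
    rw [hiid, Fin.prod_univ_succAbove _ i]
    simp [Fin.insertNthEquiv]
  simp only [h, h2]
  have h3 : ∀ a : X, (∑' b : Fin K → X, if w = b then p a * ∏ j, p (b j) else 0)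
      = p a * ∏ j, p (w j) := by
    intro a
    rw [tsum_eq_single w]
    · simp
    · intro b hb
      simp [hb.symm]
  simp only [h3]
  rw [ENNReal.tsum_mul_right, p.tsum_coe, one_mul]

/-- Draw-and-delete commutes with the multinomial: `iid n` is the distribution of
`n` independent samples of `p` (mass `∏ i, p (v i)`), the multinomial is
`mn n p = PMF.map acc (iid n)`, and `DD` is draw-and-delete, the unique map with
`DD (acc v) = PMF.map acc (del v)`. -/
theorem mn_bind_DD {X : Type u} {K : ℕ} (p : PMF X)
    (iid : (n : ℕ) → PMF (Fin n → X))
    (hiid : ∀ (n : ℕ) (v : Fin n → X), iid n v = ∏ i, p (v i))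
    (DD : Sym X (K + 1) → PMF (Sym X K))
    (hDD : ∀ v : Fin (K + 1) → X, DD (acc v) = PMF.map acc (del v)) :
    (PMF.map acc (iid (K + 1))).bind DD = PMF.map acc (iid K) := by
  rw [PMF.bind_map]
  have h1 : DD ∘ acc = fun v : Fin (K + 1) → X => PMF.map acc (del v) := funext hDD
  rw [h1, ← PMF.map_bind]
  congr 1
  have h2 : (del : (Fin (K + 1) → X) → _) = fun v => (PMF.uniformOfFintype (Fin (K + 1))).bind
      (fun i => PMF.pure (v ∘ Fin.succAbove i)) := rfl
  rw [h2, PMF.bind_comm]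
  have h3 : ∀ i : Fin (K + 1), ((iid (K + 1)).bind fun v => PMF.pure (v ∘ Fin.succAbove i))
      = iid K := fun i => map_succAbove_iid p iid hiid i
  simp only [h3, PMF.bind_const]
end

section
/- The multinomial satisfies a graded chain rule under multiset join: for every p : PMF X and K, L : ℕ, PMF.map join (mn K (mn L p)) = mn (K·L) p, where mn K (mn L p) : PMF (Sym (Sym X L) K) is the multinomial over the distribution mn L p on L-sized multisets. -/
universe u

/-- Multiset join: the sum of the `K` multisets of size `L` contained in `M`. -/
def join {X : Type u} {K L : ℕ} (M : Sym (Sym X L) K) : Sym X (K * L) :=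
  ⟨(M.toMultiset.map Sym.toMultiset).join, by
    rw [Multiset.card_join, Multiset.map_map]
    rw [Multiset.map_congr rfl (fun x _ => x.2)]
    simp [Multiset.map_const', M.2, mul_comm]⟩

theorem prod_tsum_fin {U : Type u} (K : ℕ) (f : Fin K → U → ENNReal) :
    ∏ k, ∑' x, f k x = ∑' w : Fin K → U, ∏ k, f k (w k) := by
  induction K with
  | zero => simp
  | succ n ih =>
    rw [Fin.prod_univ_succ, ih, ← (Fin.consEquiv (fun _ => U)).tsum_eq, ENNReal.tsum_prod',
      ← ENNReal.tsum_mul_right]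
    refine tsum_congr fun a => ?_
    rw [← ENNReal.tsum_mul_left]
    refine tsum_congr fun b => ?_
    rw [Fin.prod_univ_succ]
    simp [Fin.consEquiv]

theorem join_acc_acc {X : Type u} {K L : ℕ} (w : Fin (K * L) → X) :
    join (acc (fun k : Fin K => acc (fun l : Fin L => w (finProdFinEquiv (k, l))))) = acc w := by
  apply Subtype.ext
  change (Multiset.map Sym.toMultiset ((List.ofFn (fun k : Fin K =>
    acc (fun l : Fin L => w (finProdFinEquiv (k, l)))) : List (Sym X L)) :
      Multiset (Sym X L))).join = ((List.ofFn w : List X) : Multiset X)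
  rw [List.ofFn_mul]
  rw [Multiset.map_coe, List.map_ofFn, ← Multiset.coe_join, List.map_ofFn]
  congr 3
  funext k
  change ((List.ofFn _ : List X) : Multiset X) = ((List.ofFn _ : List X) : Multiset X)
  congr 3
  funext l
  congr 1
  apply Fin.ext
  simp [finProdFinEquiv, mul_comm, add_comm]

theorem iidK_eq {X : Type u} {K L : ℕ} (p : PMF X)
    (iidL : PMF (Fin L → X))
    (hiidL : ∀ v : Fin L → X, iidL v = ∏ i, p (v i))
    (iidK : PMF (Fin K → Sym X L))
    (hiidK : ∀ v : Fin K → Sym X L, iidK v = ∏ i, (PMF.map acc iidL) (v i))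
    (iidKL : PMF (Fin (K * L) → X))
    (hiidKL : ∀ v : Fin (K * L) → X, iidKL v = ∏ i, p (v i)) :
    iidK = PMF.map (fun w k => acc (fun l : Fin L => w (finProdFinEquiv (k, l)))) iidKL := by
  classical
  ext v
  rw [hiidK]
  simp only [PMF.map_apply]
  rw [prod_tsum_fin,
    ← ((finProdFinEquiv.symm.arrowCongr (Equiv.refl X)).trans (Equiv.curry _ _ _)).tsum_eq]
  refine tsum_congr fun w => ?_
  rw [hiidKL, ← finProdFinEquiv.prod_comp, Fintype.prod_prod_type]
  simp only [hiidL]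
  split_ifs with h
  · refine Finset.prod_congr rfl fun k _ => ?_
    exact if_pos (congrFun h k)
  · obtain ⟨k, hk⟩ := Function.ne_iff.mp h
    refine Finset.prod_eq_zero (Finset.mem_univ k) ?_
    rw [if_neg]
    exact hk

/-- The multinomial satisfies a graded chain rule under multiset join:
`iid* ` are i.i.d. sampling distributions (mass `∏ i, q (v i)`), the multinomial
is `mn n q = PMF.map acc (iid)`, and pushing `mn K (mn L p)` forward along `join`
gives `mn (K * L) p`. -/
theorem mn_join {X : Type u} {K L : ℕ} (p : PMF X)
    (iidL : PMF (Fin L → X))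
    (hiidL : ∀ v : Fin L → X, iidL v = ∏ i, p (v i))
    (iidK : PMF (Fin K → Sym X L))
    (hiidK : ∀ v : Fin K → Sym X L, iidK v = ∏ i, (PMF.map acc iidL) (v i))
    (iidKL : PMF (Fin (K * L) → X))
    (hiidKL : ∀ v : Fin (K * L) → X, iidKL v = ∏ i, p (v i)) :
    PMF.map join (PMF.map acc iidK) = PMF.map acc iidKL := by
  rw [iidK_eq p iidL hiidL iidK hiidK iidKL hiidKL, PMF.map_comp, PMF.map_comp]
  congr 1
  funext w
  exact join_acc_acc w
end

section
/- Multinomials satisfy the convolution property: for every p : PMF X and K, L : ℕ, sampling independently from mn K p and mn L p and adding the resulting multisets gives mn (K+L) p; that is, (mn K p).bind (fun m => PMF.map (fun n => m + n) (mn L p)) = mn (K+L) p. -/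
universe u

/-- The sum `m + n : Sym X (K + L)` of multisets: addition of the underlying
multisets. -/
instance {X : Type u} {K L : ℕ} : HAdd (Sym X K) (Sym X L) (Sym X (K + L)) :=
  ⟨Sym.append⟩

theorem acc_append {X : Type u} {K L : ℕ} (v : Fin K → X) (w : Fin L → X) :
    acc (Fin.append v w) = acc v + acc w := by
  apply Subtype.ext
  change ((List.ofFn (Fin.append v w) : List X) : Multiset X)
    = ((List.ofFn v : List X) : Multiset X) + ((List.ofFn w : List X) : Multiset X)
  rw [List.ofFn_fin_append, Multiset.coe_add]

theorem append_inj_aux {X : Type u} {K L : ℕ} {a v : Fin K → X} {b w : Fin L → X}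
    (h : Fin.append a b = Fin.append v w) : a = v ∧ b = w :=
  Prod.ext_iff.1 ((Fin.appendEquiv K L).injective (a₁ := (a, b)) (a₂ := (v, w)) h)

/-- Multinomials satisfy the convolution property: sampling independently from
`mn K p = PMF.map acc iidK` and `mn L p = PMF.map acc iidL` and adding the
resulting multisets gives `mn (K+L) p = PMF.map acc iidKL`, where `iid*` are the
i.i.d. sampling distributions (mass `∏ i, p (v i)`). -/
theorem mn_convolution {X : Type u} {K L : ℕ} (p : PMF X)
    (iidK : PMF (Fin K → X))
    (hiidK : ∀ v : Fin K → X, iidK v = ∏ i, p (v i))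
    (iidL : PMF (Fin L → X))
    (hiidL : ∀ v : Fin L → X, iidL v = ∏ i, p (v i))
    (iidKL : PMF (Fin (K + L) → X))
    (hiidKL : ∀ v : Fin (K + L) → X, iidKL v = ∏ i, p (v i)) :
    (PMF.map acc iidK).bind (fun m => PMF.map (fun n => m + n) (PMF.map acc iidL)) =
      PMF.map acc iidKL := by
  have key : iidKL = iidK.bind (fun v => PMF.map (Fin.append v) iidL) := by
    ext w
    obtain ⟨⟨a, b⟩, rfl⟩ := (Fin.appendEquiv (α := X) K L).surjective w
    change iidKL (Fin.append a b) = (iidK.bind _) (Fin.append a b)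
    rw [PMF.bind_apply, tsum_eq_single a, PMF.map_apply, tsum_eq_single b, if_pos rfl,
      hiidKL, hiidK, hiidL, Fin.prod_univ_add]
    · simp
    · intro b' hb
      exact if_neg fun h => hb (append_inj_aux h).2.symm
    · intro a' ha
      rw [PMF.map_apply, ENNReal.tsum_eq_zero.2, mul_zero]
      intro b'
      exact if_neg fun h => ha (append_inj_aux h).1.symm
  rw [key, PMF.map_bind, PMF.bind_map]
  congr 1
  funext v
  simp only [Function.comp_apply, PMF.map_comp]
  congr 1
  funext w
  exact (acc_append v w).symm
end

section
/- Multizip of independent multinomials is the multinomial of the product distribution: for all p : PMF X, q : PMF Y and K : ℕ, (mn K p).bind (fun m => (mn K q).bind (fun n => mzip m n)) = mn K (p ⊗ q), where p ⊗ q : PMF (X × Y) is the independent product distribution with mass p x * q y at (x, y). -/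
universe u

theorem bind_map_pair {A B C : Type*} (P : PMF A) (Q : PMF B) (F : A → B → C)
    (hF : ∀ a b a' b', F a b = F a' b' → a = a' ∧ b = b') (a : A) (b : B) :
    (P.bind (fun x => PMF.map (F x) Q)) (F a b) = P a * Q b := by
  classical
  rw [PMF.bind_apply, tsum_eq_single a]
  · rw [PMF.map_apply, tsum_eq_single b]
    · simp
    · intro b' hb
      rw [if_neg]
      intro h
      exact hb (hF _ _ _ _ h).2.symm
  · intro a' ha
    rw [PMF.map_apply]
    have : ∀ b', (if F a b = F a' b' then Q b' else 0) = 0 := by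
      intro b'
      rw [if_neg]
      intro h
      exact ha (hF _ _ _ _ h).1.symm
    simp [this]

theorem iid_map_perm {X : Type*} {K : ℕ} (p : PMF X) (r : PMF (Fin K → X))
    (hr : ∀ v : Fin K → X, r v = ∏ i, p (v i)) (σ : Equiv.Perm (Fin K)) :
    PMF.map (fun v => v ∘ σ) r = r := by
  classical
  ext w
  rw [PMF.map_apply, tsum_eq_single (w ∘ σ.symm)]
  · rw [if_pos (by ext i; simp), hr, hr]
    exact Equiv.prod_comp σ.symm (fun i => p (w i))
  · intro v hv
    rw [if_neg]
    rintro rfl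
    exact hv (by ext i; simp)

theorem iid_bind_perm {X : Type u} {K : ℕ} (p : PMF X) (r : PMF (Fin K → X))
    (hr : ∀ v : Fin K → X, r v = ∏ i, p (v i)) : r.bind perm = r := by
  have h : r.bind perm = (PMF.uniformOfFintype (Equiv.Perm (Fin K))).bind
      (fun σ => PMF.map (fun v => v ∘ σ) r) := by
    have hp : ∀ v : Fin K → X, perm v = (PMF.uniformOfFintype (Equiv.Perm (Fin K))).bind
        (fun σ => PMF.pure (v ∘ σ)) := by
      intro v
      change ((PMF.uniformOfFintype (Equiv.Perm (Fin K))).bind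
        (fun σ => PMF.pure (σ : Fin K → Fin K))).bind (fun f => PMF.pure (v ∘ f)) = _
      rw [PMF.bind_bind]
      simp only [PMF.pure_bind]
    rw [show (perm : (Fin K → X) → PMF (Fin K → X)) = _ from funext hp, PMF.bind_comm]
    rfl
  rw [h]
  simp only [iid_map_perm p r hr, PMF.bind_const]

/-- Multizip of independent multinomials is the multinomial of the independent
product distribution `p ⊗ q = p.bind (fun x => PMF.map (Prod.mk x) q)`.
Here `mn K p = PMF.map acc iidX`, etc., with `iid*` the i.i.d. sampling
distributions (mass the product of the individual masses), `arr` is the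
arrangement map (the unique map with `arr (acc v) = perm v`), and the multizip is
`mzip m n = (arr m).bind (fun a => PMF.map (fun b => acc (fun i => (a i, b i))) (arr n))`. -/
theorem mn_mzip {X Y : Type u} {K : ℕ} (p : PMF X) (q : PMF Y)
    (arr : {Z : Type u} → Sym Z K → PMF (Fin K → Z))
    (harr : ∀ {Z : Type u} (v : Fin K → Z), arr (acc v) = perm v)
    (iidX : PMF (Fin K → X))
    (hiidX : ∀ v : Fin K → X, iidX v = ∏ i, p (v i))
    (iidY : PMF (Fin K → Y))
    (hiidY : ∀ v : Fin K → Y, iidY v = ∏ i, q (v i))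
    (iidXY : PMF (Fin K → X × Y))
    (hiidXY : ∀ v : Fin K → X × Y,
      iidXY v = ∏ i, (p.bind (fun x => PMF.map (Prod.mk x) q)) (v i)) :
    (PMF.map acc iidX).bind (fun m => (PMF.map acc iidY).bind (fun n =>
        (arr m).bind (fun a => PMF.map (fun b => acc (fun i => (a i, b i))) (arr n)))) =
      PMF.map acc iidXY := by
  have hXY : iidXY = iidX.bind (fun a => PMF.map (fun b i => (a i, b i)) iidY) := by
    ext u
    have h1 := bind_map_pair iidX iidY (fun a b i => (a i, b i))
      (fun a b a' b' h => ⟨funext fun i => congrArg Prod.fst (congrFun h i),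
        funext fun i => congrArg Prod.snd (congrFun h i)⟩) (fun i => (u i).1) (fun i => (u i).2)
    refine Eq.trans ?_ h1.symm
    rw [hiidXY, hiidX, hiidY, ← Finset.prod_mul_distrib]
    refine Finset.prod_congr rfl fun i _ => ?_
    exact bind_map_pair p q Prod.mk (fun a b a' b' h => by simpa using h) (u i).1 (u i).2
  have hX := iid_bind_perm p iidX hiidX
  have hY := iid_bind_perm q iidY hiidY
  simp only [PMF.bind_map, Function.comp_def, harr]
  have h2 : ∀ v : Fin K → X, (iidY.bind fun w => (perm v).bind fun a =>
      PMF.map (fun b => acc (fun i => (a i, b i))) (perm w)) =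
      (perm v).bind fun a => PMF.map (fun b => acc (fun i => (a i, b i))) iidY := by
    intro v
    rw [PMF.bind_comm]
    congr 1
    funext a
    rw [← PMF.map_bind, hY]
  simp only [h2]
  rw [← PMF.bind_bind, hX, hXY, PMF.map_bind]
  simp only [PMF.map_comp, Function.comp_def]
end

section
/- Hypergeometric after multinomial is multinomial: for every p : PMF X and K ≤ L, (mn L p).bind (hg L K) = mn K p, where hg L K is the hypergeometric map given by (L−K)-fold iterated draw-and-delete. -/
universe u

/-- The `d`-fold Kleisli iterate of draw-and-delete `DD`,
mapping `Sym X (K + d)` to distributions on `Sym X K`. -/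
noncomputable def iterDD {X : Type u} (DD : {n : ℕ} → Sym X (n + 1) → PMF (Sym X n)) :
    (d : ℕ) → {K : ℕ} → Sym X (K + d) → PMF (Sym X K)
  | 0, _, m => PMF.pure m
  | d + 1, _, m => (DD m).bind (iterDD DD d)

open scoped ENNReal in
theorem iid_tsum_aux {X : Type u} (p : PMF X) {n : ℕ} (i : Fin (n + 1))
    (f : (Fin n → X) → ℝ≥0∞) :
    ∑' v : Fin (n + 1) → X, f (v ∘ Fin.succAbove i) * ∏ j, p (v j) =
      ∑' w : Fin n → X, f w * ∏ j, p (w j) := by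
  rw [← (Fin.insertNthEquiv (fun _ => X) i).tsum_eq, ENNReal.tsum_prod', ENNReal.tsum_comm]
  refine tsum_congr fun w => ?_
  have h : ∀ x : X, f ((Fin.insertNthEquiv (fun _ => X) i (x, w)) ∘ Fin.succAbove i) *
      ∏ j, p (Fin.insertNthEquiv (fun _ => X) i (x, w) j) = p x * (f w * ∏ j, p (w j)) := by
    intro x
    have h1 : (Fin.insertNthEquiv (fun _ => X) i (x, w)) ∘ Fin.succAbove i = w := by
      funext j
      simp [Fin.insertNthEquiv]
    rw [h1, Fin.prod_univ_succAbove _ i]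
    simp only [Fin.insertNthEquiv, Equiv.coe_fn_mk, Fin.insertNth_apply_same,
      Fin.insertNth_apply_succAbove]
    ring
  simp_rw [h]
  rw [ENNReal.tsum_mul_right, p.tsum_coe, one_mul]

theorem iid_tsum {X : Type u} (p : PMF X) (n : ℕ) :
    ∑' v : Fin n → X, ∏ j, p (v j) = 1 := by
  induction n with
  | zero => simp
  | succ n ih =>
    have := iid_tsum_aux p (0 : Fin (n + 1)) (fun _ => 1)
    simpa [ih] using this

theorem exists_iid {X : Type u} (p : PMF X) (n : ℕ) :
    ∃ q : PMF (Fin n → X), ∀ v, q v = ∏ j, p (v j) :=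
  ⟨⟨fun v => ∏ j, p (v j), by
    rw [← iid_tsum p n]; exact ENNReal.summable.hasSum⟩, fun _ => rfl⟩

theorem iid_marginal {X : Type u} (p : PMF X) {n : ℕ} (i : Fin (n + 1))
    (q : PMF (Fin (n + 1) → X)) (hq : ∀ v, q v = ∏ j, p (v j))
    (r : PMF (Fin n → X)) (hr : ∀ v, r v = ∏ j, p (v j)) :
    PMF.map (fun v => v ∘ Fin.succAbove i) q = r := by
  classical
  ext w
  have := iid_tsum_aux p i (fun u => if w = u then 1 else 0)
  simp only [ite_mul, one_mul, zero_mul] at this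
  rw [PMF.map_apply, hr]
  simp only [hq]
  convert this using 1
  rw [tsum_eq_single w]
  · simp
  · intro b hb
    simp [hb.symm]

theorem iid_bind_del {X : Type u} (p : PMF X) {n : ℕ}
    (q : PMF (Fin (n + 1) → X)) (hq : ∀ v, q v = ∏ j, p (v j))
    (r : PMF (Fin n → X)) (hr : ∀ v, r v = ∏ j, p (v j)) :
    q.bind del = r := by
  have h : ∀ i : Fin (n + 1), q.bind (fun v => PMF.pure (v ∘ Fin.succAbove i)) = r :=
    fun i => iid_marginal p i q hq r hr
  calc q.bind del = q.bind (fun v => (PMF.uniformOfFintype (Fin (n + 1))).bind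
        (fun i => PMF.pure (v ∘ Fin.succAbove i))) := rfl
    _ = r := by
      rw [PMF.bind_comm]
      simp_rw [h]
      exact PMF.bind_const _ _

theorem mn_bind_iterDD {X : Type u} {K : ℕ} (p : PMF X)
    (DD : {n : ℕ} → Sym X (n + 1) → PMF (Sym X n))
    (hDD : ∀ {n : ℕ} (v : Fin (n + 1) → X), DD (acc v) = PMF.map acc (del v))
    (r : PMF (Fin K → X)) (hr : ∀ v, r v = ∏ j, p (v j)) (d : ℕ) :
    ∀ q : PMF (Fin (K + d) → X), (∀ v, q v = ∏ j, p (v j)) →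
      (PMF.map acc q).bind (iterDD DD d) = PMF.map acc r := by
  induction d with
  | zero =>
    intro q hq
    have : q = r := by
      ext v
      rw [hq, hr]
      rfl
    subst this
    exact PMF.bind_pure _
  | succ d ih =>
    intro q hq
    obtain ⟨s, hs⟩ := exists_iid p (K + d)
    have h1 : (PMF.map acc q).bind (fun m => DD (n := K + d) m) = PMF.map acc s := by
      rw [PMF.bind_map, ← iid_bind_del p q hq s hs, PMF.map_bind]
      congr 1
      funext v
      exact hDD v
    rw [← ih s hs, ← h1, PMF.bind_bind]
    rfl

theorem mn_bind_hg_aux {X : Type u} {K L d : ℕ} (h : L = K + d) (p : PMF X)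
    (DD : {n : ℕ} → Sym X (n + 1) → PMF (Sym X n))
    (hDD : ∀ {n : ℕ} (v : Fin (n + 1) → X), DD (acc v) = PMF.map acc (del v))
    (q : PMF (Fin L → X)) (hq : ∀ v, q v = ∏ j, p (v j))
    (r : PMF (Fin K → X)) (hr : ∀ v, r v = ∏ j, p (v j)) :
    (PMF.map acc q).bind (fun m => iterDD DD d (Sym.cast h m)) = PMF.map acc r := by
  subst h
  exact mn_bind_iterDD p DD hDD r hr d q hq

/-- Hypergeometric after multinomial is multinomial: for `K ≤ L`, binding the
multinomial `mn L p = PMF.map acc iidL` with the hypergeometric map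
`hg L K` (the `(L-K)`-fold iterated draw-and-delete) yields
`mn K p = PMF.map acc iidK`.  Here `iid*` are the i.i.d. sampling distributions
(mass `∏ i, p (v i)`) and `DD` is draw-and-delete, the unique map with
`DD (acc v) = PMF.map acc (del v)`. -/
theorem mn_bind_hg {X : Type u} {K L : ℕ} (hKL : K ≤ L) (p : PMF X)
    (DD : {n : ℕ} → Sym X (n + 1) → PMF (Sym X n))
    (hDD : ∀ {n : ℕ} (v : Fin (n + 1) → X), DD (acc v) = PMF.map acc (del v))
    (iidL : PMF (Fin L → X))
    (hiidL : ∀ v : Fin L → X, iidL v = ∏ i, p (v i))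
    (iidK : PMF (Fin K → X))
    (hiidK : ∀ v : Fin K → X, iidK v = ∏ i, p (v i)) :
    (PMF.map acc iidL).bind
        (fun m => iterDD DD (L - K) (Sym.cast (Nat.add_sub_cancel' hKL).symm m)) =
      PMF.map acc iidK := by
  exact mn_bind_hg_aux _ p DD hDD iidL hiidL iidK hiidK
end
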